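/- arXiv:2403.01064 — 3 statements merged into one kernel-verified Lean document; each statement's English description precedes it below -/
import Mathlib

section
/- Let q ∈ ℂ with 0 < |q| < 1, let p be a positive integer, and let y ∈ ℂ with y ≠ 0. Assume the family (i,j) ↦ τ_p(j-i) τ(i-j) y^{i-j} q^{ij} / ((q;q)_i (q;q)_j) indexed by ℕ×ℕ is absolutely summable. Then ∑_{i,j≥0} τ_p(j-i) τ(i-j) y^{i-j} q^{ij} / ((q;q)_i (q;q)_j) = (-q/y; q^{p+1})_∞ · (-q^p y; q^{p+1})_∞ · (q^{p+1}; q^{p+1})_∞ / (q;q)_∞. -/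
/-- The finite q-shifted factorial with base `Q`: `(a;Q)_n = ∏_{k=0}^{n-1} (1 - a Q^k)`. -/
noncomputable def qPoch (a q : ℂ) (n : ℕ) : ℂ := ∏ k ∈ Finset.range n, (1 - a * q ^ k)

/-- The infinite q-shifted factorial `(a;Q)_∞ = ∏_{k=0}^{∞} (1 - a Q^k)`. -/
noncomputable def qPochInf (a q : ℂ) : ℂ := ∏' k : ℕ, (1 - a * q ^ k)

/-- `τ(n) = (-1)^n q^{n(n-1)/2}` for `n : ℤ`. -/
noncomputable def qTauZ (q : ℂ) (n : ℤ) : ℂ := (-1 : ℂ) ^ n * q ^ ((n * (n - 1)) / 2).toNat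

/-- `τ_p(n) = (-1)^n q^{p·n(n-1)/2}` for `n : ℤ`. -/
noncomputable def qTauP (q : ℂ) (p : ℕ) (n : ℤ) : ℂ :=
  (-1 : ℂ) ^ n * q ^ (p * ((n * (n - 1)) / 2).toNat)


lemma qp_zero (q : ℂ) : qPoch q q 0 = 1 := by simp [qPoch]

lemma one_sub_ne {q : ℂ} (hq1 : ‖q‖ < 1) (k : ℕ) : 1 - q ^ (k+1) ≠ 0 := by
  intro h
  have h2 : q ^ (k+1) = 1 := (sub_eq_zero.mp h).symm
  have h3 : ‖q‖ ^ (k+1) = 1 := by rw [← norm_pow, h2, norm_one]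
  have := pow_lt_one₀ (norm_nonneg q) hq1 (Nat.succ_ne_zero k)
  simp at this
  linarith

noncomputable def qa (q : ℂ) (k : ℕ) : ℂ := (qPoch q q k)⁻¹

lemma qa_zero (q : ℂ) : qa q 0 = 1 := by simp [qa, qp_zero]

lemma qa_succ {q : ℂ} (hq1 : ‖q‖ < 1) (k : ℕ) : (1 - q ^ (k+1)) * qa q (k+1) = qa q k := by
  have := one_sub_ne hq1 k
  unfold qa
  have h : qPoch q q (k+1) = qPoch q q k * (1 - q^(k+1)) := by
    unfold qPoch; rw [Finset.prod_range_succ]; ring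
  rw [h, mul_inv]; field_simp

open Finset in
lemma euler_fin {q : ℂ} (hq1 : ‖q‖ < 1) (z : ℂ) (N : ℕ) :
    ∑ k ∈ antidiagonal N, (q ^ (k.1.choose 2) * z ^ k.1 * qa q k.1) * qa q k.2
      = qa q N * qPoch (-z) q N := by
  induction N with
  | zero => simp [qa_zero, qPoch]
  | succ N ih =>
    have h0 := one_sub_ne hq1 N
    apply mul_left_cancel₀ h0
    have key : (1 - q^(N+1)) * ∑ k ∈ antidiagonal (N+1), (q ^ (k.1.choose 2) * z ^ k.1 * qa q k.1) * qa q k.2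
      = ∑ k ∈ antidiagonal (N+1), (q ^ (k.1.choose 2) * z ^ k.1 * qa q k.1) * ((1 - q^k.2) * qa q k.2)
       + ∑ k ∈ antidiagonal (N+1), (q ^ (k.1.choose 2) * z ^ k.1 * ((1 - q^k.1) * qa q k.1)) * (q^k.2 * qa q k.2) := by
      rw [mul_sum, ← sum_add_distrib]
      refine sum_congr rfl fun k hk => ?_
      rw [← mem_antidiagonal.mp hk]; ring
    rw [key, Nat.sum_antidiagonal_succ', Nat.sum_antidiagonal_succ]
    simp only [qa_succ hq1, pow_zero, sub_self, zero_mul, mul_zero, add_zero, zero_add]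
    have h2 : ∑ k ∈ antidiagonal N, (q ^ ((k.1+1).choose 2) * z ^ (k.1+1) * qa q k.1) * (q^k.2 * qa q k.2)
       = z * q^N * ∑ k ∈ antidiagonal N, (q ^ (k.1.choose 2) * z ^ k.1 * qa q k.1) * qa q k.2 := by
      rw [mul_sum]
      refine sum_congr rfl fun k hk => ?_
      rw [← mem_antidiagonal.mp hk]
      have : (k.1+1).choose 2 = k.1 + k.1.choose 2 := by
        rw [Nat.choose_succ_succ']; simp
      rw [this]; ring
    rw [h2, ih]
    rw [← mul_assoc (1 - q^(N+1)), qa_succ hq1]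
    have h : qPoch (-z) q (N+1) = qPoch (-z) q N * (1 - -z * q^N) := by
      unfold qPoch; rw [prod_range_succ]
    rw [h]; ring

open Finset in
lemma durfee_fin {q : ℂ} (hq1 : ‖q‖ < 1) (N : ℕ) : ∀ n : ℕ,
    ∑ k ∈ antidiagonal N, (q ^ (k.1 * (k.1 + n)) * qa q k.1 * qa q (n + k.1)) * qa q k.2
      = qa q N * qa q (n + N) := by
  induction N with
  | zero => intro n; simp [qa_zero]
  | succ N ih =>
    intro n
    have h0 := one_sub_ne hq1 N
    apply mul_left_cancel₀ h0
    have key : (1 - q^(N+1)) * ∑ k ∈ antidiagonal (N+1), (q ^ (k.1 * (k.1 + n)) * qa q k.1 * qa q (n + k.1)) * qa q k.2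
      = ∑ k ∈ antidiagonal (N+1), (q ^ (k.1 * (k.1 + n)) * qa q k.1 * qa q (n + k.1)) * ((1 - q^k.2) * qa q k.2)
       + ∑ k ∈ antidiagonal (N+1), (q ^ (k.1 * (k.1 + n)) * ((1 - q^k.1) * qa q k.1) * qa q (n + k.1)) * (q^k.2 * qa q k.2) := by
      rw [mul_sum, ← sum_add_distrib]
      refine sum_congr rfl fun k hk => ?_
      rw [← mem_antidiagonal.mp hk]; ring
    rw [key, Nat.sum_antidiagonal_succ', Nat.sum_antidiagonal_succ]
    simp only [qa_succ hq1, pow_zero, sub_self, zero_mul, mul_zero, add_zero, zero_add]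
    have h2 : ∑ k ∈ antidiagonal N, (q ^ ((k.1 + 1) * (k.1 + 1 + n)) * qa q k.1 * qa q (n + (k.1+1))) * (q^k.2 * qa q k.2)
       = q^(n+N+1) * ∑ k ∈ antidiagonal N, (q ^ (k.1 * (k.1 + (n+1))) * qa q k.1 * qa q (n + 1 + k.1)) * qa q k.2 := by
      rw [mul_sum]
      refine sum_congr rfl fun k hk => ?_
      rw [← mem_antidiagonal.mp hk, show n + (k.1+1) = n+1+k.1 by ring]
      ring
    rw [h2, ih, ih]
    rw [← mul_assoc (1 - q^(N+1)), qa_succ hq1, ← qa_succ hq1 (n+N), show n+1+N = n+N+1 by ring,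
      show n+(N+1) = n+N+1 by ring]
    ring

open Finset Filter Topology in
lemma conv_lim {f a : ℕ → ℂ} {C : ℝ} {l : ℂ} (hf : Summable fun j => ‖f j‖) (hC : ∀ k, ‖a k‖ ≤ C)
    (ha : Tendsto a atTop (𝓝 l)) :
    Tendsto (fun N => ∑ k ∈ antidiagonal N, f k.1 * a k.2) atTop (𝓝 ((∑' j, f j) * l)) := by
  have e : ∀ N, ∑ k ∈ antidiagonal N, f k.1 * a k.2 = ∑' j, if j < N + 1 then f j * a (N - j) else 0 := by
    intro N
    rw [Nat.sum_antidiagonal_eq_sum_range_succ (fun i j => f i * a j), tsum_eq_sum (s := range (N+1))]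
    · refine sum_congr rfl fun j hj => ?_
      rw [if_pos (mem_range.mp hj)]
    · intro j hj
      rw [if_neg (by simpa using hj)]
  simp_rw [e]
  rw [← tsum_mul_right]
  refine tendsto_tsum_of_dominated_convergence (bound := fun j => ‖f j‖ * C) (hf.mul_right C) ?_ ?_
  · intro j
    have h1 : Tendsto (fun N => f j * a (N - j)) atTop (𝓝 (f j * l)) :=
      (ha.comp (tendsto_sub_atTop_nat j)).const_mul _
    refine h1.congr' ?_
    filter_upwards [eventually_ge_atTop j] with N hN
    rw [if_pos (by omega)]
  · refine Eventually.of_forall fun N j => ?_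
    have hC0 : 0 ≤ C := (norm_nonneg _).trans (hC 0)
    split_ifs
    · rw [norm_mul]; gcongr; exact hC _
    · simp; positivity

lemma sum_geom {Q : ℂ} (hQ : ‖Q‖ < 1) (a : ℂ) : Summable fun k : ℕ => ‖-(a * Q ^ k)‖ := by
  simp only [norm_neg, norm_mul, norm_pow]
  exact (summable_geometric_of_lt_one (norm_nonneg _) hQ).mul_left _

open Filter Topology in
lemma qPoch_tendsto {Q : ℂ} (hQ : ‖Q‖ < 1) (a : ℂ) :
    Tendsto (fun n => qPoch a Q n) atTop (𝓝 (qPochInf a Q)) := by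
  have h := (multipliable_one_add_of_summable (sum_geom hQ a)).tendsto_prod_tprod_nat
  simpa only [qPoch, qPochInf, sub_eq_add_neg] using h

lemma qPochInf_ne {q : ℂ} (hq1 : ‖q‖ < 1) : qPochInf q q ≠ 0 := by
  have h := tprod_one_add_ne_zero_of_summable (f := fun k : ℕ => -(q * q ^ k)) (fun i => by
    have := one_sub_ne hq1 i
    rwa [pow_succ', sub_eq_add_neg] at this) (sum_geom hq1 q)
  simpa only [qPochInf, sub_eq_add_neg] using h

open Filter Topology in
lemma qa_tendsto {q : ℂ} (hq1 : ‖q‖ < 1) :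
    Tendsto (qa q) atTop (𝓝 (qPochInf q q)⁻¹) :=
  (qPoch_tendsto hq1 q).inv₀ (qPochInf_ne hq1)

lemma qa_bdd {q : ℂ} (hq1 : ‖q‖ < 1) : ∃ C, ∀ k, ‖qa q k‖ ≤ C := by
  obtain ⟨C, hC⟩ := (qa_tendsto hq1).norm.bddAbove_range
  exact ⟨C, fun k => hC ⟨k, rfl⟩⟩

lemma choose_two_succ (k : ℕ) : (k+1).choose 2 = k + k.choose 2 := by
  rw [Nat.choose_succ_succ']; simp

open Filter Topology in
lemma euler_summable {q : ℂ} (hq1 : ‖q‖ < 1) (z : ℂ) :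
    Summable fun k : ℕ => ‖q ^ (k.choose 2) * z ^ k * qa q k‖ := by
  obtain ⟨C, hC⟩ := qa_bdd hq1
  have h : Summable fun k : ℕ => ‖q ^ (k.choose 2) * z ^ k‖ := by
    refine summable_of_ratio_norm_eventually_le (r := 1/2) (by norm_num) ?_
    have ht : Tendsto (fun k : ℕ => ‖q‖ ^ k * ‖z‖) atTop (𝓝 (0 * ‖z‖)) :=
      (tendsto_pow_atTop_nhds_zero_of_lt_one (norm_nonneg _) hq1).mul_const _
    rw [zero_mul] at ht
    filter_upwards [ht.eventually_le_const (show (0:ℝ) < 1/2 by norm_num)] with k hk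
    rw [choose_two_succ]
    have : ‖‖q ^ (k + k.choose 2) * z ^ (k+1)‖‖ = (‖q‖ ^ k * ‖z‖) * ‖‖q ^ (k.choose 2) * z ^ k‖‖ := by
      simp only [norm_norm, norm_mul, norm_pow]; ring
    rw [this]; gcongr
  refine Summable.of_nonneg_of_le (fun _ => norm_nonneg _) (fun k => ?_) (h.mul_right C)
  rw [norm_mul _ (qa q k)]
  gcongr; exact hC k

lemma euler {q : ℂ} (hq1 : ‖q‖ < 1) (z : ℂ) :
    ∑' k : ℕ, q ^ (k.choose 2) * z ^ k * qa q k = qPochInf (-z) q := by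
  obtain ⟨C, hC⟩ := qa_bdd hq1
  have h1 := conv_lim (euler_summable hq1 z) hC (qa_tendsto hq1)
  simp only [euler_fin hq1 z] at h1
  have h2 := (qa_tendsto hq1).mul (qPoch_tendsto hq1 (-z))
  have h3 := tendsto_nhds_unique h1 h2
  have := inv_ne_zero (qPochInf_ne hq1)
  rw [mul_comm] at h3
  exact mul_left_cancel₀ this h3

lemma durfee {q : ℂ} (hq1 : ‖q‖ < 1) (n : ℕ) :
    ∑' j : ℕ, q ^ (j * (j + n)) * qa q j * qa q (n + j) = (qPochInf q q)⁻¹ := by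
  obtain ⟨C, hC⟩ := qa_bdd hq1
  have hs : Summable fun j : ℕ => ‖q ^ (j * (j + n)) * qa q j * qa q (n + j)‖ := by
    refine Summable.of_nonneg_of_le (fun _ => norm_nonneg _) (fun k => ?_)
      ((summable_geometric_of_lt_one (norm_nonneg _) hq1).mul_right (C * C))
    have hC0 : 0 ≤ C := (norm_nonneg _).trans (hC 0)
    rw [norm_mul, norm_mul, norm_pow, mul_assoc]
    gcongr ?_ * (?_ * ?_)
    · apply pow_le_pow_of_le_one (norm_nonneg _) hq1.le
      nlinarith [Nat.zero_le (k * n), Nat.le_mul_self k]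
    · exact hC _
    · exact hC _
  have h1 := conv_lim hs hC (qa_tendsto hq1)
  simp only [durfee_fin hq1] at h1
  have h2 := (qa_tendsto hq1).mul ((qa_tendsto hq1).comp (Filter.tendsto_add_atTop_nat n))
  have h3 := tendsto_nhds_unique h1 (h2.congr fun N => by simp [add_comm])
  have := inv_ne_zero (qPochInf_ne hq1)
  exact mul_right_cancel₀ this h3

def zEquiv : ℤ × ℕ ≃ ℕ × ℕ where
  toFun x := (x.2 + x.1.toNat, x.2 + (-x.1).toNat)
  invFun x := ((x.1 : ℤ) - x.2, min x.1 x.2)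
  left_inv x := by ext <;> simp <;> omega
  right_inv x := by ext <;> simp <;> omega

lemma lemA {q : ℂ} (hq1 : ‖q‖ < 1) (g : ℤ → ℂ)
    (hs : Summable fun x : ℕ × ℕ => g ((x.1 : ℤ) - x.2) * (q ^ (x.1 * x.2) * qa q x.1 * qa q x.2)) :
    ∑' x : ℕ × ℕ, g ((x.1 : ℤ) - x.2) * (q ^ (x.1 * x.2) * qa q x.1 * qa q x.2)
      = (∑' n : ℤ, g n) * (qPochInf q q)⁻¹ := by
  have hs2 := zEquiv.summable_iff.mpr hs
  simp only [Function.comp_def] at hs2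
  rw [← zEquiv.tsum_eq, Summable.tsum_prod hs2, ← tsum_mul_right]
  refine tsum_congr fun n => ?_
  have e : ∀ m : ℕ, (((zEquiv (n, m)).1 : ℕ) : ℤ) - ((zEquiv (n, m)).2 : ℕ) = n := by
    intro m; simp [zEquiv]
  simp only [e]
  rw [tsum_mul_left]
  congr 1
  rcases Int.eq_nat_or_neg n with ⟨k, rfl | rfl⟩
  · rw [← durfee hq1 k]
    refine tsum_congr fun m => ?_
    simp [zEquiv]
    rw [add_comm m k]; ring
  · rw [← durfee hq1 k]
    refine tsum_congr fun m => ?_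
    simp [zEquiv, add_comm m k]

lemma two_choose (k : ℕ) : 2 * ((k.choose 2 : ℕ) : ℤ) = k * (k - 1) := by
  induction k with
  | zero => simp
  | succ k ih => rw [choose_two_succ]; push_cast; linarith

lemma two_e (n : ℤ) : 2 * ((((n * (n - 1)) / 2).toNat : ℕ) : ℤ) = n * (n - 1) := by
  have h1 : 0 ≤ n * (n-1) := by
    rcases le_or_gt n 0 with h | h
    · nlinarith
    · exact mul_nonneg h.le (by omega)
  have h2 := (Int.even_mul_pred_self n).two_dvd
  generalize n * (n-1) = m at *
  omega

noncomputable def gJ (Q z : ℂ) (n : ℤ) : ℂ := Q ^ ((n * (n - 1)) / 2).toNat * z ^ n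

lemma jtp {Q z : ℂ} (hQ0 : Q ≠ 0) (hQ : ‖Q‖ < 1) (hz : z ≠ 0) :
    qPochInf (-z) Q * qPochInf (-(Q / z)) Q = (∑' n : ℤ, gJ Q z n) * (qPochInf Q Q)⁻¹ := by
  have hterm : ∀ x : ℕ × ℕ, (Q ^ (x.1.choose 2) * z ^ x.1 * qa Q x.1) *
      (Q ^ (x.2.choose 2) * (Q / z) ^ x.2 * qa Q x.2) =
      gJ Q z ((x.1 : ℤ) - x.2) * (Q ^ (x.1 * x.2) * qa Q x.1 * qa Q x.2) := by
    rintro ⟨i, j⟩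
    have he := two_e ((i : ℤ) - j)
    have h1 := two_choose i
    have h2 := two_choose j
    have : i.choose 2 + j.choose 2 + j = ((((i:ℤ) - j) * ((i:ℤ) - j - 1)) / 2).toNat + i * j := by
      zify; push_cast at *; nlinarith
    have hp : Q ^ (i.choose 2) * Q ^ (j.choose 2) * Q ^ j = Q ^ ((((i:ℤ) - j) * ((i:ℤ) - j - 1)) / 2).toNat * Q ^ (i * j) := by
      rw [← pow_add, ← pow_add, ← pow_add, this]
    simp only [gJ]
    rw [zpow_sub₀ hz, zpow_natCast, zpow_natCast, div_pow]
    linear_combination (z ^ i / z ^ j * qa Q i * qa Q j) * hp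
  rw [← euler hQ, ← euler hQ, tsum_mul_tsum_of_summable_norm (euler_summable hQ z) (euler_summable hQ (Q / z))]
  have hs := summable_mul_of_summable_norm (euler_summable hQ z) (euler_summable hQ (Q / z))
  simp only [hterm] at hs ⊢
  exact lemA hQ _ hs

theorem stmt11 (q : ℂ) (hq0 : 0 < ‖q‖) (hq1 : ‖q‖ < 1)
    (p : ℕ) (hp : 0 < p) (y : ℂ) (hy : y ≠ 0)
    (h1 : Summable (fun ij : ℕ × ℕ => ‖qTauP q p ((ij.2 : ℤ) - (ij.1 : ℤ)) *
      qTauZ q ((ij.1 : ℤ) - (ij.2 : ℤ)) * y ^ ((ij.1 : ℤ) - (ij.2 : ℤ)) *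
      q ^ (ij.1 * ij.2) / (qPoch q q ij.1 * qPoch q q ij.2)‖)) :
    ∑' ij : ℕ × ℕ, qTauP q p ((ij.2 : ℤ) - (ij.1 : ℤ)) *
      qTauZ q ((ij.1 : ℤ) - (ij.2 : ℤ)) * y ^ ((ij.1 : ℤ) - (ij.2 : ℤ)) *
      q ^ (ij.1 * ij.2) / (qPoch q q ij.1 * qPoch q q ij.2)
    = qPochInf (-q / y) (q ^ (p + 1)) * qPochInf (-q ^ p * y) (q ^ (p + 1)) *
      qPochInf (q ^ (p + 1)) (q ^ (p + 1)) / qPochInf q q := by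
  have hq : q ≠ 0 := norm_pos_iff.mp hq0
  have hQ : ‖q ^ (p+1)‖ < 1 := by
    rw [norm_pow]; exact pow_lt_one₀ (norm_nonneg _) hq1 (Nat.succ_ne_zero p)
  have hQ0 : q ^ (p+1) ≠ 0 := pow_ne_zero _ hq
  have hz : q ^ p * y ≠ 0 := mul_ne_zero (pow_ne_zero _ hq) hy
  have hterm : ∀ ij : ℕ × ℕ, qTauP q p ((ij.2 : ℤ) - (ij.1 : ℤ)) *
      qTauZ q ((ij.1 : ℤ) - (ij.2 : ℤ)) * y ^ ((ij.1 : ℤ) - (ij.2 : ℤ)) *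
      q ^ (ij.1 * ij.2) / (qPoch q q ij.1 * qPoch q q ij.2) =
      gJ (q ^ (p+1)) (q ^ p * y) ((ij.1 : ℤ) - ij.2) *
        (q ^ (ij.1 * ij.2) * qa q ij.1 * qa q ij.2) := by
    rintro ⟨i, j⟩
    have hn : (j : ℤ) - i = -((i : ℤ) - j) := by ring
    simp only [hn]
    generalize (i : ℤ) - j = n
    have e1 := two_e n
    have e2 := two_e (-n)
    simp only [qTauP, qTauZ, gJ, qa]
    generalize ((n * (n - 1)) / 2).toNat = a at *
    generalize ((-n * (-n - 1)) / 2).toNat = b at *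
    have hb : (b : ℤ) = a + n := by linarith
    have hs : (-1 : ℂ) ^ (-n) * (-1) ^ n = 1 := by
      rw [← zpow_add₀ (by norm_num)]; simp
    have hpw : q ^ (p * b) = q ^ (p * a) * (q ^ p) ^ n := by
      rw [pow_mul, pow_mul, ← zpow_natCast (q ^ p) b, hb, zpow_add₀ (pow_ne_zero _ hq), zpow_natCast]
    rw [hpw, mul_zpow, ← pow_mul, add_mul, one_mul, pow_add, div_eq_mul_inv, mul_inv]
    linear_combination (q ^ (p * a) * (q ^ p) ^ n * q ^ a * y ^ n * q ^ (i * j) *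
      (qPoch q q i)⁻¹ * (qPoch q q j)⁻¹) * hs
  have h2 := h1.of_norm
  simp only [hterm] at h2 ⊢
  rw [lemA hq1 _ h2]
  have hj := jtp hQ0 hQ hz
  have hne := qPochInf_ne hQ
  have r1 : -q ^ p * y = -(q ^ p * y) := by ring
  have r2 : -q / y = -(q ^ (p+1) / (q ^ p * y)) := by
    rw [pow_succ]; field_simp
  rw [r1, r2, mul_comm (qPochInf (-(q ^ (p+1) / (q ^ p * y))) _), hj, div_eq_mul_inv,
    mul_assoc (∑' n, _) _ (qPochInf (q ^ (p+1)) _), inv_mul_cancel₀ hne, mul_one]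
end

section
/- Let q ∈ ℂ with 0 < |q| < 1, let p be a positive integer, and let y ∈ ℂ with y ≠ 0. Assume the family (i,j) ↦ τ_p(j-i) τ(i-j) y^{i-j} q^{(i+1)j} / ((q;q)_i (q;q)_j) indexed by ℕ×ℕ is absolutely summable, as well as each of the iterated series on the right-hand side below. Then ∑_{i,j≥0} τ_p(j-i) τ(i-j) y^{i-j} q^{(i+1)j} / ((q;q)_i (q;q)_j) = [1/(q;q)_∞] · ( ∑_{n≥0} τ_{p+1}(n) (-q^2/y)^n · ∑_{i≥0} τ(i) q^{(n+1)i} + ∑_{n≥1} τ_{p+1}(-n) (-y/q)^n · ∑_{i≥0} τ(i) q^{(n+1)i} ). -/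
open Filter Topology in
lemma aux_zero (q : ℂ) (hq1 : ‖q‖ < 1) (E : ℕ → ℂ) (C : ℝ) (hC : ∀ n, ‖E n‖ ≤ C)
    (h : ∀ n, E n = -q ^ (n + 1) * E (n + 1)) (n : ℕ) : E n = 0 := by
  have key : ∀ k n, ‖E n‖ ≤ ‖q‖ ^ k * C := by
    intro k
    induction k with
    | zero => intro n; simpa using hC n
    | succ k ih =>
      intro n
      rw [h n, norm_mul, norm_neg, norm_pow, pow_succ' ‖q‖ k, mul_assoc]
      have h1 : ‖q‖ ^ (n + 1) ≤ ‖q‖ := by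
        simpa using pow_le_pow_of_le_one (norm_nonneg q) hq1.le (Nat.succ_le_succ (Nat.zero_le n))
      exact mul_le_mul h1 (ih _) (norm_nonneg _) (norm_nonneg _)
  have ht : Tendsto (fun k : ℕ => ‖q‖ ^ k * C) atTop (𝓝 (0 * C)) :=
    (tendsto_pow_atTop_nhds_zero_of_lt_one (norm_nonneg q) hq1).mul_const C
  have := ge_of_tendsto' ht (fun k => key k n)
  rw [zero_mul] at this
  exact norm_le_zero_iff.mp this

lemma aux_fac (q : ℂ) (hq1 : ‖q‖ < 1) (k : ℕ) : 1 - q * q ^ k ≠ 0 := by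
  intro h
  have h2 : q ^ (k + 1) = 1 := by rw [pow_succ']; linear_combination -h
  have h3 : ‖q‖ ^ (k + 1) = 1 := by rw [← norm_pow, h2, norm_one]
  exact absurd h3 (pow_lt_one₀ (norm_nonneg q) hq1 (Nat.succ_ne_zero k)).ne

lemma aux_ne (q : ℂ) (hq1 : ‖q‖ < 1) (n : ℕ) : qPoch q q n ≠ 0 :=
  Finset.prod_ne_zero_iff.mpr fun k _ => aux_fac q hq1 k

lemma aux_succ (q : ℂ) (n : ℕ) : qPoch q q (n + 1) = qPoch q q n * (1 - q ^ (n + 1)) := by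
  rw [qPoch, Finset.prod_range_succ, ← pow_succ']; rfl

lemma aux_sum (q : ℂ) (hq1 : ‖q‖ < 1) : Summable (fun k : ℕ => ‖-(q * q ^ k)‖) := by
  simp only [norm_neg, norm_mul, norm_pow]
  exact (summable_geometric_of_lt_one (norm_nonneg q) hq1).mul_left _

lemma aux_inf_ne (q : ℂ) (hq1 : ‖q‖ < 1) : qPochInf q q ≠ 0 := by
  have := tprod_one_add_ne_zero_of_summable (f := fun k : ℕ => -(q * q ^ k))
    (fun k => by simpa [sub_eq_add_neg] using aux_fac q hq1 k) (aux_sum q hq1)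
  simpa [qPochInf, sub_eq_add_neg] using this

open Filter Topology in
lemma aux_tend (q : ℂ) (hq1 : ‖q‖ < 1) :
    Tendsto (fun n => qPoch q q n) atTop (𝓝 (qPochInf q q)) := by
  have := (multipliable_one_add_of_summable (aux_sum q hq1)).tendsto_prod_tprod_nat
  simpa [qPochInf, qPoch, sub_eq_add_neg] using this

lemma aux_bd (q : ℂ) (hq1 : ‖q‖ < 1) : ∃ C : ℝ, 0 ≤ C ∧ ∀ n, ‖(qPoch q q n)⁻¹‖ ≤ C := by
  obtain ⟨C, hC⟩ := ((aux_tend q hq1).inv₀ (aux_inf_ne q hq1)).norm.bddAbove_range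
  have h : ∀ n, ‖(qPoch q q n)⁻¹‖ ≤ C := fun n => hC ⟨n, rfl⟩
  exact ⟨C, (norm_nonneg _).trans (h 0), h⟩

noncomputable def auxT (q : ℂ) (n m i : ℕ) : ℂ :=
  q ^ (i ^ 2 + m * i) / (qPoch q q i * qPoch q q (i + n))

lemma aux_T_bd (q : ℂ) (hq1 : ‖q‖ < 1) : ∃ C : ℝ, 0 ≤ C ∧ ∀ n m i,
    ‖auxT q n m i‖ ≤ C * ‖q‖ ^ i := by
  obtain ⟨C, hC0, hC⟩ := aux_bd q hq1
  refine ⟨C * C, by positivity, fun n m i => ?_⟩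
  rw [auxT, div_eq_mul_inv, mul_inv, norm_mul, norm_mul, norm_pow, mul_comm]
  have : ‖q‖ ^ (i ^ 2 + m * i) ≤ ‖q‖ ^ i :=
    pow_le_pow_of_le_one (norm_nonneg q) hq1.le (by nlinarith [Nat.le_self_pow two_ne_zero i])
  gcongr
  · exact hC _
  · exact hC _

lemma aux_T_sum (q : ℂ) (hq1 : ‖q‖ < 1) (n m : ℕ) : Summable (auxT q n m) := by
  obtain ⟨C, hC0, hC⟩ := aux_T_bd q hq1
  exact Summable.of_norm_bounded
    ((summable_geometric_of_lt_one (norm_nonneg q) hq1).mul_left C) (hC n m)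

noncomputable def auxA (q : ℂ) (n m : ℕ) : ℂ := ∑' i, auxT q n m i

lemma aux_A_bd (q : ℂ) (hq1 : ‖q‖ < 1) : ∃ C : ℝ, ∀ n m, ‖auxA q n m‖ ≤ C := by
  obtain ⟨C, hC0, hC⟩ := aux_T_bd q hq1
  exact ⟨_, fun n m => tsum_of_norm_bounded
    ((summable_geometric_of_lt_one (norm_nonneg q) hq1).mul_left C).hasSum (hC n m)⟩

lemma aux_R (q : ℂ) (hq1 : ‖q‖ < 1) (n m : ℕ) :
    auxA q n m = auxA q (n + 1) m - q ^ (n + 1) * auxA q (n + 1) (m + 1) := by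
  rw [auxA, auxA, auxA, ← tsum_mul_left, ← (aux_T_sum q hq1 _ _).tsum_sub
    ((aux_T_sum q hq1 _ _).mul_left _)]
  refine tsum_congr fun i => ?_
  have h1 := aux_ne q hq1 i
  have h2 := aux_ne q hq1 (i + n)
  have h3 := aux_ne q hq1 (i + n + 1)
  have h4 := aux_succ q (i + n)
  have h5 : 1 - q ^ (i + n + 1) ≠ 0 := by
    rw [h4] at h3; exact right_ne_zero_of_mul h3
  simp only [auxT, ← add_assoc]
  rw [h4]
  field_simp
  ring

lemma aux_S (q : ℂ) (hq1 : ‖q‖ < 1) (n m : ℕ) :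
    auxA q n m - auxA q n (m + 1) = q ^ (m + 1) * auxA q (n + 1) (m + 2) := by
  rw [auxA, auxA, auxA, ← tsum_mul_left, ← (aux_T_sum q hq1 _ _).tsum_sub
    (aux_T_sum q hq1 _ _), ((aux_T_sum q hq1 _ _).sub (aux_T_sum q hq1 _ _)).tsum_eq_zero_add]
  have h0 : auxT q n m 0 - auxT q n (m + 1) 0 = 0 := by simp [auxT]
  rw [h0, zero_add]
  refine tsum_congr fun i => ?_
  have h1 := aux_ne q hq1 i
  have h2 := aux_ne q hq1 (i + 1 + n)
  have h3 := aux_ne q hq1 (i + 1)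
  have h4 := aux_succ q i
  have h5 : 1 - q ^ (i + 1) ≠ 0 := by
    rw [h4] at h3; exact right_ne_zero_of_mul h3
  have h6 : i + (n + 1) = i + 1 + n := by ring
  simp only [auxT, h6]
  rw [h4]
  field_simp
  ring

open Filter Topology in
lemma aux_diag (q : ℂ) (hq1 : ‖q‖ < 1) (n : ℕ) : auxA q n n = 1 / qPochInf q q := by
  obtain ⟨C, hC⟩ := aux_A_bd q hq1
  have hD : ∀ n, auxA q n n - auxA q (n + 1) (n + 1) = 0 := by
    refine aux_zero q hq1 (fun n => auxA q n n - auxA q (n + 1) (n + 1)) (C + C)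
      (fun n => (norm_sub_le _ _).trans (add_le_add (hC _ _) (hC _ _))) ?_
    intro n
    have hr := aux_R q hq1 n n
    have hs := aux_S q hq1 (n + 1) n
    simp only [add_assoc, Nat.reduceAdd] at *
    linear_combination hr + hs
  have hconst : ∀ k, auxA q k k = auxA q 0 0 := by
    intro k
    induction k with
    | zero => rfl
    | succ k ih => rw [← ih]; linear_combination -hD k
  obtain ⟨C', hC0', hC'⟩ := aux_T_bd q hq1
  have hlim : Tendsto (fun k => auxA q k k) atTop
      (𝓝 (∑' i : ℕ, if i = 0 then 1 / qPochInf q q else 0)) := by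
    refine tendsto_tsum_of_dominated_convergence
      ((summable_geometric_of_lt_one (norm_nonneg q) hq1).mul_left C') ?_
      (Eventually.of_forall fun k i => hC' k k i)
    intro i
    have hinv : Tendsto (fun k => (qPoch q q (i + k))⁻¹) atTop (𝓝 (qPochInf q q)⁻¹) := by
      have := (tendsto_add_atTop_iff_nat i).mpr ((aux_tend q hq1).inv₀ (aux_inf_ne q hq1))
      simpa [add_comm] using this
    by_cases hi : i = 0
    · subst hi
      simpa [auxT, qPoch] using hinv
    · rw [if_neg hi]
      have hp : Tendsto (fun k : ℕ => (q ^ i) ^ k) atTop (𝓝 0) := by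
        apply tendsto_pow_atTop_nhds_zero_of_norm_lt_one
        rw [norm_pow]
        exact pow_lt_one₀ (norm_nonneg q) hq1 hi
      have h := (hp.mul hinv).const_mul (q ^ (i ^ 2) * (qPoch q q i)⁻¹)
      rw [zero_mul, mul_zero] at h
      refine h.congr fun k => ?_
      rw [auxT, div_eq_mul_inv, mul_inv, pow_add, mul_comm k i, pow_mul q i k]
      ring
  rw [tsum_ite_eq] at hlim
  rw [hconst n]
  exact tendsto_nhds_unique (tendsto_const_nhds.congr fun k => (hconst k).symm) hlim

lemma aux_tri (n : ℕ) : ((n : ℤ) * ((n : ℤ) - 1) / 2).toNat = n.choose 2 := by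
  have : (n : ℤ) * ((n : ℤ) - 1) = 2 * (n.choose 2 : ℤ) := by
    induction n with
    | zero => simp
    | succ k ih =>
      rw [Nat.choose_succ_succ' k 1, Nat.choose_one_right]
      push_cast
      linear_combination ih
  rw [this]; simp

lemma aux_tri_neg (n : ℕ) : ((-(n : ℤ)) * (-(n : ℤ) - 1) / 2).toNat = n + n.choose 2 := by
  have h := aux_tri (n + 1)
  rw [Nat.choose_succ_succ' n 1, Nat.choose_one_right] at h
  rw [← h]; congr 2; push_cast; ring

lemma aux_tau_zero (q : ℂ) : qTauZ q ((0 : ℕ) : ℤ) = 1 := by simp [qTauZ]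

lemma aux_tau (q : ℂ) (i : ℕ) : qTauZ q (i : ℤ) = (-1) ^ i * q ^ (i.choose 2) := by
  rw [qTauZ, aux_tri, zpow_natCast]

lemma aux_tau_neg (q : ℂ) (i : ℕ) : qTauZ q (-(i : ℤ)) = (-1) ^ i * q ^ (i + i.choose 2) := by
  rw [qTauZ, aux_tri_neg, zpow_neg, zpow_natCast, ← inv_pow]; norm_num

lemma aux_tauP (q : ℂ) (p i : ℕ) : qTauP q p (i : ℤ) = (-1) ^ i * q ^ (p * i.choose 2) := by
  rw [qTauP, aux_tri, zpow_natCast]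

lemma aux_tauP_neg (q : ℂ) (p i : ℕ) :
    qTauP q p (-(i : ℤ)) = (-1) ^ i * q ^ (p * (i + i.choose 2)) := by
  rw [qTauP, aux_tri_neg, zpow_neg, zpow_natCast, ← inv_pow]; norm_num

lemma aux_G_bd (q : ℂ) (hq1 : ‖q‖ < 1) (n i : ℕ) :
    ‖qTauZ q (i : ℤ) * q ^ ((n + 1) * i)‖ ≤ ‖q‖ ^ i := by
  rw [aux_tau, mul_assoc, ← pow_add, norm_mul, norm_pow, norm_pow, norm_neg, norm_one, one_pow,
    one_mul]
  exact pow_le_pow_of_le_one (norm_nonneg q) hq1.le (by nlinarith [Nat.zero_le (i.choose 2)])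

lemma aux_F (q : ℂ) (hq1 : ‖q‖ < 1) (n : ℕ) : auxA q n (n + 1) =
    1 / qPochInf q q * ∑' i : ℕ, qTauZ q (i : ℤ) * q ^ ((n + 1) * i) := by
  have hgeo := summable_geometric_of_lt_one (norm_nonneg q) hq1
  have hs : ∀ n, Summable fun i : ℕ => qTauZ q (i : ℤ) * q ^ ((n + 1) * i) := fun n =>
    Summable.of_norm_bounded hgeo (aux_G_bd q hq1 n)
  obtain ⟨C, hC⟩ := aux_A_bd q hq1
  set G : ℕ → ℂ := fun n => ∑' i : ℕ, qTauZ q (i : ℤ) * q ^ ((n + 1) * i) with hG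
  have hGb : ∀ n, ‖G n‖ ≤ ∑' i : ℕ, ‖q‖ ^ i := fun n =>
    tsum_of_norm_bounded hgeo.hasSum (aux_G_bd q hq1 n)
  have hGr : ∀ n, G n = 1 - q ^ (n + 1) * G (n + 1) := by
    intro n
    simp only [hG]
    rw [(hs n).tsum_eq_zero_add, aux_tau_zero, ← tsum_mul_left, sub_eq_add_neg, ← tsum_neg]
    congr 1
    · simp
    · refine tsum_congr fun i => ?_
      rw [aux_tau, aux_tau, Nat.choose_succ_succ' i 1, Nat.choose_one_right]
      ring
  have := aux_zero q hq1 (fun n => auxA q n (n + 1) - 1 / qPochInf q q * G n)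
    (C + ‖1 / qPochInf q q‖ * ∑' i : ℕ, ‖q‖ ^ i) (fun n => by
      refine (norm_sub_le _ _).trans (add_le_add (hC _ _) ?_)
      rw [norm_mul]
      exact mul_le_mul_of_nonneg_left (hGb n) (norm_nonneg _)) (fun n => by
      have h1 := aux_S q hq1 n n
      rw [aux_diag q hq1 n] at h1
      have h2 := hGr n
      simp only [add_assoc, Nat.reduceAdd] at *
      linear_combination -h1 - 1 / qPochInf q q * h2) n
  exact sub_eq_zero.mp this

def auxEquiv : (ℕ × ℕ) ⊕ (ℕ × ℕ) ≃ ℕ × ℕ where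
  toFun := Sum.elim (fun x => (x.2, x.2 + x.1)) (fun x => (x.2 + (x.1 + 1), x.2))
  invFun x := if x.1 ≤ x.2 then Sum.inl (x.2 - x.1, x.1) else Sum.inr (x.1 - x.2 - 1, x.2)
  left_inv := by
    rintro (⟨a, b⟩ | ⟨a, b⟩)
    · simp
    · simp
  right_inv := by
    rintro ⟨a, b⟩
    by_cases h : a ≤ b
    · simp [h]
    · simp [h]
      omega

theorem stmt13 (q : ℂ) (hq0 : 0 < ‖q‖) (hq1 : ‖q‖ < 1)
    (p : ℕ) (hp : 0 < p) (y : ℂ) (hy : y ≠ 0)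
    (h1 : Summable (fun ij : ℕ × ℕ => ‖qTauP q p ((ij.2 : ℤ) - (ij.1 : ℤ)) *
      qTauZ q ((ij.1 : ℤ) - (ij.2 : ℤ)) * y ^ ((ij.1 : ℤ) - (ij.2 : ℤ)) *
      q ^ ((ij.1 + 1) * ij.2) / (qPoch q q ij.1 * qPoch q q ij.2)‖))
    (hg : ∀ n : ℕ, Summable (fun i : ℕ => ‖qTauZ q (i : ℤ) * q ^ ((n + 1) * i)‖))
    (h2 : Summable (fun n : ℕ => ‖qTauP q (p + 1) (n : ℤ) * (-q ^ 2 / y) ^ n *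
      ∑' i : ℕ, qTauZ q (i : ℤ) * q ^ ((n + 1) * i)‖))
    (h3 : Summable (fun n : ℕ => ‖qTauP q (p + 1) (-((n : ℤ) + 1)) * (-y / q) ^ (n + 1) *
      ∑' i : ℕ, qTauZ q (i : ℤ) * q ^ ((n + 2) * i)‖)) :
    ∑' ij : ℕ × ℕ, qTauP q p ((ij.2 : ℤ) - (ij.1 : ℤ)) *
      qTauZ q ((ij.1 : ℤ) - (ij.2 : ℤ)) * y ^ ((ij.1 : ℤ) - (ij.2 : ℤ)) *
      q ^ ((ij.1 + 1) * ij.2) / (qPoch q q ij.1 * qPoch q q ij.2)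
    = (1 / qPochInf q q) *
      ((∑' n : ℕ, qTauP q (p + 1) (n : ℤ) * (-q ^ 2 / y) ^ n *
          ∑' i : ℕ, qTauZ q (i : ℤ) * q ^ ((n + 1) * i))
      + ∑' n : ℕ, qTauP q (p + 1) (-((n : ℤ) + 1)) * (-y / q) ^ (n + 1) *
          ∑' i : ℕ, qTauZ q (i : ℤ) * q ^ ((n + 2) * i)) := by
  have hq : q ≠ 0 := norm_pos_iff.mp hq0
  have hs := h1.of_norm
  set f : ℕ × ℕ → ℂ := fun ij => qTauP q p ((ij.2 : ℤ) - (ij.1 : ℤ)) *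
      qTauZ q ((ij.1 : ℤ) - (ij.2 : ℤ)) * y ^ ((ij.1 : ℤ) - (ij.2 : ℤ)) *
      q ^ ((ij.1 + 1) * ij.2) / (qPoch q q ij.1 * qPoch q q ij.2) with hf
  have hse : Summable (fun x => f (auxEquiv x)) := auxEquiv.summable_iff.mpr hs
  have hl : Summable ((fun x => f (auxEquiv x)) ∘ Sum.inl) := hse.comp_injective Sum.inl_injective
  have hr : Summable ((fun x => f (auxEquiv x)) ∘ Sum.inr) := hse.comp_injective Sum.inr_injective
  rw [← auxEquiv.tsum_eq f, (hl.hasSum.sum hr.hasSum).tsum_eq, hl.tsum_prod, hr.tsum_prod,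
    mul_add, ← tsum_mul_left, ← tsum_mul_left]
  have hm : ∀ n : ℕ, ((-1 : ℂ) ^ n) * (-1) ^ n = 1 := fun n => by
    rw [← mul_pow]; norm_num
  congr 1
  · refine tsum_congr fun n => ?_
    rw [mul_left_comm, ← aux_F q hq1 n, auxA, ← tsum_mul_left]
    refine tsum_congr fun i => ?_
    have e1 : ((i + n : ℕ) : ℤ) - (i : ℤ) = (n : ℤ) := by push_cast; ring
    have e2 : (i : ℤ) - ((i + n : ℕ) : ℤ) = -(n : ℤ) := by push_cast; ring
    simp only [hf, auxEquiv, Function.comp, Equiv.coe_fn_mk, Sum.elim_inl]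
    rw [e1, e2, aux_tauP, aux_tauP, aux_tau_neg, auxT, zpow_neg, zpow_natCast, neg_div,
      neg_pow (q ^ 2 / y), div_pow]
    have h1 := aux_ne q hq1 i
    have h2 := aux_ne q hq1 (i + n)
    field_simp
    ring
  · refine tsum_congr fun n => ?_
    have := aux_F q hq1 (n + 1)
    simp only [add_assoc, Nat.reduceAdd] at this
    rw [mul_left_comm, ← this, auxA, ← tsum_mul_left]
    refine tsum_congr fun i => ?_
    have e1 : (i : ℤ) - ((i + (n + 1) : ℕ) : ℤ) = -((n + 1 : ℕ) : ℤ) := by push_cast; ring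
    have e2 : ((i + (n + 1) : ℕ) : ℤ) - (i : ℤ) = ((n + 1 : ℕ) : ℤ) := by push_cast; ring
    have e3 : -((n : ℤ) + 1) = -((n + 1 : ℕ) : ℤ) := by push_cast; ring
    simp only [hf, auxEquiv, Function.comp, Equiv.coe_fn_mk, Sum.elim_inr]
    rw [e1, e2, e3, aux_tauP_neg, aux_tauP_neg, aux_tau, auxT, zpow_natCast, neg_div, neg_pow (y / q),
      div_pow]
    have h1 := aux_ne q hq1 i
    have h2 := aux_ne q hq1 (i + (n + 1))
    rw [show n + 2 = n + 1 + 1 from rfl]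
    generalize n + 1 = m at *
    field_simp
    ring
end

section
/- Let q ∈ ℂ with 0 < |q| < 1 and let x, z ∈ ℂ with z ≠ 0 and z ≠ q^{-m} for every m ∈ ℕ (so that (z;q)_n ≠ 0 for all n). Assume the series ∑_{n≥0} (-x/z;q)_n q^{n(n-1)/2} z^n / ((q;q)_n (z;q)_n) converges absolutely and the family (j,k) ↦ q^{j^2 + 2jk + 2k^2 - j - k} x^j z^{2k} / ((q;q)_j (q^2;q^2)_k) indexed by ℕ×ℕ is absolutely summable. Then (z;q)_∞ · ∑_{n≥0} (-x/z;q)_n q^{n(n-1)/2} z^n / ((q;q)_n (z;q)_n) = ∑_{j,k≥0} q^{j^2 + 2jk + 2k^2 - j - k} x^j z^{2k} / ((q;q)_j (q^2;q^2)_k). -/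
open Finset Filter Topology

lemma qq_ne {q : ℂ} (hq1 : ‖q‖ < 1) (n : ℕ) : 1 - q ^ (n + 1) ≠ 0 := by
  intro h
  have h2 : q ^ (n + 1) = 1 := (sub_eq_zero.mp h).symm
  have h3 : ‖q‖ ^ (n + 1) = 1 := by rw [← norm_pow, h2, norm_one]
  have h4 : ‖q‖ ^ (n + 1) < 1 := pow_lt_one₀ (norm_nonneg _) hq1 (by omega)
  linarith

/-- reciprocal of (q;q)_n -/
noncomputable def cc (q : ℂ) (n : ℕ) : ℂ := (qPoch q q n)⁻¹

lemma qPoch_zero (a q : ℂ) : qPoch a q 0 = 1 := by simp [qPoch]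

lemma qPoch_succ (a q : ℂ) (n : ℕ) : qPoch a q (n + 1) = qPoch a q n * (1 - a * q ^ n) := by
  simp [qPoch, prod_range_succ]

lemma cc_zero (q : ℂ) : cc q 0 = 1 := by simp [cc, qPoch_zero]

lemma cc_succ {q : ℂ} (hq1 : ‖q‖ < 1) (n : ℕ) : (1 - q ^ (n + 1)) * cc q (n + 1) = cc q n := by
  have := qq_ne hq1 n
  have h : qPoch q q (n + 1) = qPoch q q n * (1 - q ^ (n + 1)) := by
    rw [qPoch_succ]; ring
  rw [cc, cc, h, mul_inv]
  field_simp

lemma ch_succ (n : ℕ) : (n + 1).choose 2 = n.choose 2 + n := by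
  rw [Nat.choose_succ_succ' n 1, Nat.choose_one_right]; ring

lemma ch_add (a b : ℕ) : (a + b).choose 2 = a.choose 2 + b.choose 2 + a * b := by
  induction b with
  | zero => simp
  | succ b ih => rw [← add_assoc, ch_succ, ih, ch_succ]; ring

lemma anti_fst {q : ℂ} (hq1 : ‖q‖ < 1) (f : ℕ → ℕ → ℂ) (N : ℕ) :
    ∑ p ∈ antidiagonal (N + 1), (1 - q ^ p.1) * cc q p.1 * f p.1 p.2 =
    ∑ p ∈ antidiagonal N, cc q p.1 * f (p.1 + 1) p.2 := by
  rw [Nat.sum_antidiagonal_succ]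
  simp [cc_succ hq1]

lemma anti_snd {q : ℂ} (hq1 : ‖q‖ < 1) (f : ℕ → ℕ → ℂ) (N : ℕ) :
    ∑ p ∈ antidiagonal (N + 1), (1 - q ^ p.2) * cc q p.2 * f p.1 p.2 =
    ∑ p ∈ antidiagonal N, cc q p.2 * f p.1 (p.2 + 1) := by
  rw [Nat.sum_antidiagonal_succ']
  simp [cc_succ hq1]

lemma qbinom {q : ℂ} (hq1 : ‖q‖ < 1) (x z : ℂ) (n : ℕ) :
    cc q n * ∏ k ∈ range n, (z + x * q ^ k) =
    ∑ p ∈ antidiagonal n, cc q p.1 * cc q p.2 * q ^ (p.1.choose 2) * x ^ p.1 * z ^ p.2 := by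
  induction n with
  | zero => simp [cc_zero]
  | succ n ih =>
    apply mul_left_cancel₀ (qq_ne hq1 n)
    rw [prod_range_succ]
    have e1 : (1 - q ^ (n + 1)) * (cc q (n + 1) * ((∏ k ∈ range n, (z + x * q ^ k)) * (z + x * q ^ n)))
      = (cc q n * ∏ k ∈ range n, (z + x * q ^ k)) * (z + x * q ^ n) := by
      rw [← cc_succ hq1 n]; ring
    rw [e1, ih, mul_sum]
    have e2 : ∀ p ∈ antidiagonal (n + 1), (1 - q ^ (n + 1)) *
        (cc q p.1 * cc q p.2 * q ^ (p.1.choose 2) * x ^ p.1 * z ^ p.2) =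
        (1 - q ^ p.2) * cc q p.2 * (cc q p.1 * q ^ (p.1.choose 2) * x ^ p.1 * z ^ p.2) +
        (1 - q ^ p.1) * cc q p.1 * (cc q p.2 * q ^ p.2 * q ^ (p.1.choose 2) * x ^ p.1 * z ^ p.2) := by
      intro p hp
      rw [← mem_antidiagonal.mp hp]; ring
    rw [sum_congr rfl e2, sum_add_distrib,
      anti_snd hq1 (fun a b => cc q a * q ^ (a.choose 2) * x ^ a * z ^ b),
      anti_fst hq1 (fun a b => cc q b * q ^ b * q ^ (a.choose 2) * x ^ a * z ^ b),
      ← sum_add_distrib, sum_mul]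
    refine sum_congr rfl fun p hp => ?_
    rw [← mem_antidiagonal.mp hp, ch_succ]; ring

/-- Gauss sum -/
noncomputable def DD (q : ℂ) (N : ℕ) : ℂ :=
  ∑ p ∈ antidiagonal N, cc q p.1 * cc q p.2 * (-1) ^ p.2

lemma DD_rec {q : ℂ} (hq1 : ‖q‖ < 1) (N : ℕ) : (1 - q ^ (N + 2)) * DD q (N + 2) = DD q N := by
  have e2 : ∀ p ∈ antidiagonal (N + 2), (1 - q ^ (N + 2)) * (cc q p.1 * cc q p.2 * (-1) ^ p.2) =
        (1 - q ^ p.1) * cc q p.1 * (cc q p.2 * (-1) ^ p.2) +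
        (1 - q ^ p.2) * cc q p.2 * (cc q p.1 * (-1) ^ p.2) -
        (1 - q ^ p.1) * cc q p.1 * ((1 - q ^ p.2) * cc q p.2 * (-1) ^ p.2) := by
    intro p hp
    rw [← mem_antidiagonal.mp hp]; ring
  rw [DD, mul_sum, sum_congr rfl e2, sum_sub_distrib, sum_add_distrib,
    anti_fst hq1 (fun a b => cc q b * (-1) ^ b),
    anti_snd hq1 (fun a b => cc q a * (-1) ^ b),
    anti_fst hq1 (fun a b => (1 - q ^ b) * cc q b * (-1) ^ b)]
  have e3 : ∑ p ∈ antidiagonal (N + 1), cc q p.1 * ((1 - q ^ p.2) * cc q p.2 * (-1) ^ p.2) =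
     ∑ p ∈ antidiagonal (N + 1), (1 - q ^ p.2) * cc q p.2 * (cc q p.1 * (-1) ^ p.2) :=
    sum_congr rfl fun p _ => by ring
  rw [e3, anti_snd hq1 (fun a b => cc q a * (-1) ^ b), ← sum_add_distrib]
  rw [sum_eq_zero (fun p _ => by ring), zero_sub, DD, ← sum_neg_distrib]
  exact sum_congr rfl fun p _ => by ring

lemma DD_odd {q : ℂ} (hq1 : ‖q‖ < 1) (k : ℕ) : DD q (2 * k + 1) = 0 := by
  induction k with
  | zero => simp [DD, Nat.sum_antidiagonal_succ, cc_zero]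
  | succ k ih =>
    have := DD_rec hq1 (2 * k + 1)
    rw [ih] at this
    exact (mul_eq_zero.mp this).resolve_left (qq_ne hq1 _)

lemma DD_even {q : ℂ} (hq1 : ‖q‖ < 1) (k : ℕ) :
    DD q (2 * k) = (qPoch (q ^ 2) (q ^ 2) k)⁻¹ := by
  induction k with
  | zero => simp [DD, cc_zero, qPoch_zero]
  | succ k ih =>
    have h := DD_rec hq1 (2 * k)
    have hn := qq_ne hq1 (2 * k + 1)
    rw [qPoch_succ, mul_inv, ← ih, ← h]
    have : 1 - q ^ 2 * (q ^ 2) ^ k = 1 - q ^ (2 * k + 1 + 1) := by ring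
    rw [this, show 2 * (k + 1) = 2 * k + 2 by ring]
    field_simp

/-- Euler term -/
noncomputable def uu (q w : ℂ) (n : ℕ) : ℂ := cc q n * q ^ (n.choose 2) * w ^ n

lemma uu_succ {q : ℂ} (hq1 : ‖q‖ < 1) (w : ℂ) (n : ℕ) :
    (1 - q ^ (n + 1)) * uu q w (n + 1) = w * uu q (q * w) n := by
  rw [uu, uu, ← cc_succ hq1 n, ch_succ]; ring

lemma uu_q (q w : ℂ) (n : ℕ) : uu q (q * w) n = q ^ n * uu q w n := by
  rw [uu, uu]; ring

lemma uu_summable {q : ℂ} (hq1 : ‖q‖ < 1) (w : ℂ) : Summable (fun n => ‖uu q w n‖) := by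
  have ht : Tendsto (fun n : ℕ => ‖w * q ^ n / (1 - q ^ (n + 1))‖) atTop (𝓝 0) := by
    have h0 := tendsto_pow_atTop_nhds_zero_of_norm_lt_one hq1
    have h1 := (tendsto_add_atTop_iff_nat 1).mpr h0
    have := ((h0.const_mul w).div (h1.const_sub 1) (by simp)).norm
    simpa using this
  have hev := ht.eventually (gt_mem_nhds (show (0 : ℝ) < 1 / 2 by norm_num))
  refine summable_of_ratio_norm_eventually_le (r := 1 / 2) (by norm_num) ?_
  filter_upwards [hev] with n hn
  have : uu q w (n + 1) = w * q ^ n / (1 - q ^ (n + 1)) * uu q w n := by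
    have h := uu_succ hq1 w n
    have hne := qq_ne hq1 n
    rw [uu_q] at h
    field_simp
    linear_combination h
  rw [norm_norm, norm_norm, this, norm_mul]
  gcongr

lemma multipliable_q {q : ℂ} (hq1 : ‖q‖ < 1) (z : ℂ) :
    Multipliable (fun k : ℕ => 1 - z * q ^ k) := by
  have : Summable (fun k : ℕ => ‖-(z * q ^ k)‖) := by
    simp only [norm_neg, norm_mul, norm_pow]
    exact (summable_geometric_of_lt_one (norm_nonneg _) hq1).mul_left _
  simpa [sub_eq_add_neg] using multipliable_one_add_of_summable this

noncomputable def EE (q w : ℂ) : ℂ := ∑' n, uu q w n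

lemma EE_rec {q : ℂ} (hq1 : ‖q‖ < 1) (w : ℂ) : EE q w = (1 + w) * EE q (q * w) := by
  have s1 := (uu_summable hq1 w).of_norm
  have s2 := (uu_summable hq1 (q * w)).of_norm
  have h : EE q w - EE q (q * w) = w * EE q (q * w) := by
    rw [EE, EE, ← s1.tsum_sub s2, (s1.sub s2).tsum_eq_zero_add, ← tsum_mul_left]
    have : uu q w 0 - uu q (q * w) 0 = 0 := by simp [uu]
    rw [this, zero_add]
    refine tsum_congr fun n => ?_
    rw [← uu_succ hq1, uu_q q w (n + 1)]; ring
  linear_combination h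

lemma EE_iter {q : ℂ} (hq1 : ‖q‖ < 1) (w : ℂ) (n : ℕ) :
    EE q (-w) = qPoch w q n * EE q (q ^ n * -w) := by
  induction n with
  | zero => simp [qPoch_zero]
  | succ n ih =>
    rw [ih, EE_rec hq1 (q ^ n * -w), qPoch_succ]
    rw [show q * (q ^ n * -w) = q ^ (n + 1) * -w by ring]; ring

lemma euler_s17 {q : ℂ} (hq1 : ‖q‖ < 1) (w : ℂ) : qPochInf w q = EE q (-w) := by
  have t1 : Tendsto (fun n => qPoch w q n) atTop (𝓝 (qPochInf w q)) :=
    (multipliable_q hq1 w).hasProd.tendsto_prod_nat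
  have t2 : Tendsto (fun n : ℕ => EE q (q ^ n * -w)) atTop (𝓝 (EE q 0)) := by
    refine tendsto_tsum_of_dominated_convergence (uu_summable hq1 (-w)) ?_ ?_
    · intro k
      have h0 := (tendsto_pow_atTop_nhds_zero_of_norm_lt_one hq1).mul_const (-w)
      rw [zero_mul] at h0
      exact (h0.pow k).const_mul _
    · refine Eventually.of_forall fun n k => ?_
      have e : uu q (q ^ n * -w) k = uu q (-w) k * q ^ (n * k) := by
        rw [uu, uu, pow_mul]; ring
      rw [e, norm_mul, norm_pow]
      exact mul_le_of_le_one_right (norm_nonneg _) (pow_le_one₀ (norm_nonneg _) hq1.le)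
  have e0 : EE q 0 = 1 := by
    rw [EE, tsum_eq_single 0]
    · simp [uu, cc_zero]
    · intro n hn; simp [uu, hn]
  have t3 := t1.mul t2
  rw [e0, mul_one] at t3
  refine tendsto_nhds_unique t3 ?_
  simp only [← EE_iter hq1]
  exact tendsto_const_nhds

lemma qPochInf_split {q : ℂ} (hq1 : ‖q‖ < 1) (z : ℂ) (n : ℕ) :
    qPochInf z q = qPoch z q n * EE q (-(z * q ^ n)) := by
  rw [euler_s17 hq1, EE_iter hq1 z n]; congr 2; ring

lemma tsum_anti {f : ℕ × ℕ → ℂ} (hf : Summable f) :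
    ∑' p, f p = ∑' n, ∑ p ∈ antidiagonal n, f p := by
  rw [← (Finset.HasAntidiagonal.sigmaAntidiagonalEquivProd (A := ℕ)).tsum_eq f]
  have : Summable (fun s => f ((Finset.HasAntidiagonal.sigmaAntidiagonalEquivProd (A := ℕ)) s)) :=
    (Finset.HasAntidiagonal.sigmaAntidiagonalEquivProd (A := ℕ)).summable_iff.mpr hf
  rw [this.tsum_sigma]
  refine tsum_congr fun n => ?_
  rw [tsum_fintype]
  exact sum_coe_sort (antidiagonal n) f

noncomputable def TT (q x z : ℂ) (p : ℕ × ℕ × ℕ) : ℂ :=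
  uu q x p.1 * (uu q z p.2.1 * uu q (-z) p.2.2) *
    q ^ (p.1.choose 2 + p.1 * p.2.1 + p.1 * p.2.2 + p.2.1 * p.2.2)

lemma TT_summable {q : ℂ} (hq1 : ‖q‖ < 1) (x z : ℂ) : Summable (TT q x z) := by
  have h1 := (uu_summable hq1 z).mul_norm (uu_summable hq1 (-z))
  have h2 := (uu_summable hq1 x).mul_norm h1
  refine Summable.of_norm_bounded h2 fun p => ?_
  rw [TT, norm_mul, norm_pow]
  exact mul_le_of_le_one_right (norm_nonneg _) (pow_le_one₀ (norm_nonneg _) hq1.le)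

lemma TT_rhs {q : ℂ} (hq1 : ‖q‖ < 1) (x z : ℂ) :
    ∑' p, TT q x z p = ∑' j, ∑' k : ℕ, cc q j * x ^ j * z ^ (2 * k) *
      q ^ (j.choose 2 + (j + 2 * k).choose 2) * (qPoch (q ^ 2) (q ^ 2) k)⁻¹ := by
  rw [(TT_summable hq1 x z).tsum_prod]
  refine tsum_congr fun j => ?_
  have hs := (TT_summable hq1 x z).prod_factor j
  rw [tsum_anti hs]
  have e : ∀ N, ∑ p ∈ antidiagonal N, TT q x z (j, p) =
      cc q j * x ^ j * z ^ N * q ^ (j.choose 2 + (j + N).choose 2) * DD q N := by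
    intro N
    rw [DD, mul_sum]
    refine sum_congr rfl fun p hp => ?_
    rw [← mem_antidiagonal.mp hp, TT, uu, uu, uu, ch_add, ch_add, neg_pow]; ring
  simp only [e]
  rw [← (show Function.Injective (fun k : ℕ => 2 * k) from fun a b h => by simpa using h).tsum_eq]
  · simp only [DD_even hq1]
  · intro N hN
    rcases Nat.even_or_odd' N with ⟨k, rfl | rfl⟩
    · exact ⟨k, rfl⟩
    · exact absurd (by simp [DD_odd hq1]) hN

lemma TT_lhs {q : ℂ} (hq1 : ‖q‖ < 1) (x z : ℂ) :
    ∑' p, TT q x z p = ∑' n : ℕ, cc q n * (∏ k ∈ range n, (z + x * q ^ k)) * q ^ (n.choose 2) *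
      EE q (-(z * q ^ n)) := by
  have hs := TT_summable hq1 x z
  have hs' : Summable (fun p : (ℕ × ℕ) × ℕ => TT q x z (p.1.1, p.1.2, p.2)) :=
    (Equiv.prodAssoc ℕ ℕ ℕ).summable_iff.mpr hs
  have h1 : ∑' p, TT q x z p = ∑' p : (ℕ × ℕ) × ℕ, TT q x z (p.1.1, p.1.2, p.2) :=
    ((Equiv.prodAssoc ℕ ℕ ℕ).tsum_eq (TT q x z)).symm
  rw [h1, hs'.tsum_prod, tsum_anti hs'.prod]
  refine tsum_congr fun n => ?_
  rw [qbinom hq1, sum_mul, sum_mul]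
  refine sum_congr rfl fun p hp => ?_
  rw [← mem_antidiagonal.mp hp, EE, ← tsum_mul_left]
  refine tsum_congr fun i => ?_
  rw [TT, uu, uu, uu, uu, ch_add]; ring

theorem stmt17 (q : ℂ) (hq0 : 0 < ‖q‖) (hq1 : ‖q‖ < 1)
    (x z : ℂ) (hz0 : z ≠ 0) (hz : ∀ m : ℕ, z ≠ q ^ (-(m : ℤ)))
    (h1 : Summable (fun n : ℕ => ‖qPoch (-x / z) q n * q ^ (n * (n - 1) / 2) *
      z ^ n / (qPoch q q n * qPoch z q n)‖))
    (h2 : Summable (fun jk : ℕ × ℕ =>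
      ‖q ^ ((jk.1 : ℤ) ^ 2 + 2 * (jk.1 : ℤ) * (jk.2 : ℤ) + 2 * (jk.2 : ℤ) ^ 2 -
          (jk.1 : ℤ) - (jk.2 : ℤ)) * x ^ jk.1 * z ^ (2 * jk.2) /
        (qPoch q q jk.1 * qPoch (q ^ 2) (q ^ 2) jk.2)‖)) :
    qPochInf z q * ∑' n : ℕ, qPoch (-x / z) q n * q ^ (n * (n - 1) / 2) *
      z ^ n / (qPoch q q n * qPoch z q n)
    = ∑' jk : ℕ × ℕ,
      q ^ ((jk.1 : ℤ) ^ 2 + 2 * (jk.1 : ℤ) * (jk.2 : ℤ) + 2 * (jk.2 : ℤ) ^ 2 -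
          (jk.1 : ℤ) - (jk.2 : ℤ)) * x ^ jk.1 * z ^ (2 * jk.2) /
        (qPoch q q jk.1 * qPoch (q ^ 2) (q ^ 2) jk.2) := by
  have hq : q ≠ 0 := norm_pos_iff.mp hq0
  have hzn : ∀ n, qPoch z q n ≠ 0 := by
    intro n
    rw [qPoch, prod_ne_zero_iff]
    intro k _ h
    apply hz k
    rw [zpow_neg, zpow_natCast]
    exact eq_inv_of_mul_eq_one_left (sub_eq_zero.mp h).symm
  have hL := TT_lhs hq1 x z
  rw [TT_rhs hq1 x z] at hL
  rw [h2.of_norm.tsum_prod, ← tsum_mul_left]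
  symm
  convert hL using 1
  · refine tsum_congr fun j => tsum_congr fun k => ?_
    have e : ((j : ℤ) ^ 2 + 2 * (j : ℤ) * (k : ℤ) + 2 * (k : ℤ) ^ 2 - (j : ℤ) - (k : ℤ)) =
        ((j.choose 2 + (j + 2 * k).choose 2 : ℕ) : ℤ) := by
      have c : ∀ n : ℕ, 2 * ((n.choose 2 : ℕ) : ℤ) = (n : ℤ) ^ 2 - n := by
        intro n
        induction n with
        | zero => simp
        | succ n ih => rw [ch_succ]; push_cast; linarith
      have c1 := c j
      have c2 := c (j + 2 * k)
      push_cast at c1 c2 ⊢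
      linarith
    simp only [e, zpow_natCast, cc]
    rw [div_eq_mul_inv, mul_inv]; ring
  · refine tsum_congr fun n => ?_
    rw [qPochInf_split hq1 z n, ← Nat.choose_two_right]
    have e : (∏ k ∈ range n, (z + x * q ^ k)) = qPoch (-x / z) q n * z ^ n := by
      rw [qPoch, ← card_range n, ← prod_const, card_range, ← prod_mul_distrib]
      refine prod_congr rfl fun k _ => ?_
      field_simp
      ring
    rw [e, cc, div_eq_mul_inv, mul_inv]
    have := hzn n
    field_simp
end
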